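/- arXiv:math/0612775 — 2 statements merged into one kernel-verified Lean document; each statement's English description precedes it below -/
import Mathlib

section
/- Let g ∈ L¹(ℝ) and define M(g)(λ) = ∫_ℝ |g(x)| e^{|λ||x|} dx (possibly +∞). If ∫_ℝ M(g)(λ) |g̃(λ)| dλ < ∞, where g̃ is the Fourier transform of g, then g = 0 almost everywhere. -/
open MeasureTheory

/-!
For `f` with `f̂` integrable, put `F z = ∬ exp (2πiz⟪x, y⟫) ⟪f x, f̂ y⟫ dx dy`. Beurling's condition
makes `F` holomorphic and bounded on the strip `|im z| < 1`. By Fourier inversion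
`F t = ∫ ⟪f x, f (t • x)⟫ dx` for real `t`, so that `F (1 / t) = |t| ^ n * conj (F t)` with `n` the
dimension. Hence `F` and its reflection `z ↦ z ^ (-n) * conj (F (1 / conj z))` agree up to sign
where both are defined, and their squares glue to a bounded holomorphic function on `ℂ` minus
`{I, -I}`. By Liouville `F ^ 2` is constant; comparing `t = 2` with `t = 1 / 2` gives `F = 0`, and
`F 1 = ∫ ‖f‖ ^ 2`. This is Hedenmalm's proof of Beurling's theorem.
-/

open Bornology Complex Filter Function Module Set Topology
open scoped ComplexConjugate FourierTransform InnerProductSpace Real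

theorem exists_const_of_differentiableOn_compl_finset_of_bounded {E : Type*} [NormedAddCommGroup E]
    [NormedSpace ℂ E] [CompleteSpace E] (s : Finset ℂ) {f : ℂ → E} {C : ℝ}
    (hd : DifferentiableOn ℂ f (↑s)ᶜ) (hC : ∀ z ∉ s, ‖f z‖ ≤ C) :
    ∃ c, ∀ z ∉ s, f z = c := by
  induction s using Finset.induction_on generalizing f C with
  | empty =>
    rw [Finset.coe_empty, compl_empty, differentiableOn_univ] at hd
    have hb : IsBounded (range f) :=
      isBounded_iff_forall_norm_le.2 ⟨C, forall_mem_range.2 fun z ↦ hC z (Finset.notMem_empty z)⟩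
    obtain ⟨c, hc⟩ := hd.exists_const_forall_eq_of_bounded hb
    exact ⟨c, fun z _ ↦ hc z⟩
  | insert a s has ih =>
    rw [Finset.coe_insert, ← union_singleton, compl_union, ← sdiff_eq] at hd
    have h_mem {z : ℂ} (hz : z ∉ s) (hza : z ≠ a) : z ∉ insert a s := by simp [hz, hza]
    have hd' := differentiableOn_update_limUnder_of_bddAbove
      (s.finite_toSet.isClosed.isOpen_compl.mem_nhds has) hd
      ⟨C, forall_mem_image.2 fun z hz ↦ hC z (h_mem hz.1 hz.2)⟩
    obtain ⟨c, hc⟩ := ih (C := max C ‖limUnder (𝓝[≠] a) f‖) hd' fun z hz ↦ by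
      rcases eq_or_ne z a with rfl | hza
      · simp
      · simp [hza, hC z (h_mem hz hza)]
    refine ⟨c, fun z hz ↦ ?_⟩
    rw [Finset.mem_insert, not_or] at hz
    simpa [hz.1] using hc z hz.2

theorem eqOn_of_preconnected_of_frequently_eq_ofReal {E : Type*} [NormedAddCommGroup E]
    [NormedSpace ℂ E] {f g : ℂ → E} {U : Set ℂ} (hf : AnalyticOnNhd ℂ f U)
    (hg : AnalyticOnNhd ℂ g U) (hU : IsPreconnected U) {x : ℝ} (hx : (x : ℂ) ∈ U)
    (hfg : ∃ᶠ t : ℝ in 𝓝[≠] x, f t = g t) : EqOn f g U := by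
  have h_tendsto : Tendsto ((↑) : ℝ → ℂ) (𝓝[≠] x) (𝓝[≠] (x : ℂ)) :=
    continuous_ofReal.continuousWithinAt.tendsto_nhdsWithin fun _ ht ↦ ofReal_injective.ne ht
  exact hf.eqOn_of_preconnected_of_frequently_eq hg hU hx (h_tendsto.frequently hfg)

/-- The strip `|im z| < 1`, the domain of `beurlingTransform`. -/
def unitStrip : Set ℂ := {z | |z.im| < 1}

/-- The image of the punctured `unitStrip` under `z ↦ 1 / conj z`, the domain of `invReflection`:
the complement of the two closed discs of radius `1 / 2` centred at `I / 2` and `-I / 2`. -/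
def invUnitStrip : Set ℂ := {z | |z.im| < normSq z}

theorem isOpen_unitStrip : IsOpen unitStrip :=
  isOpen_lt continuous_im.abs continuous_const

theorem isOpen_invUnitStrip : IsOpen invUnitStrip :=
  isOpen_lt continuous_im.abs continuous_normSq

theorem ofReal_mem_unitStrip (t : ℝ) : (t : ℂ) ∈ unitStrip := by
  simp [unitStrip]

theorem neg_mem_unitStrip {z : ℂ} (hz : z ∈ unitStrip) : -z ∈ unitStrip := by
  simpa [unitStrip] using hz

theorem neg_mem_invUnitStrip {z : ℂ} (hz : z ∈ invUnitStrip) : -z ∈ invUnitStrip := by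
  simpa [invUnitStrip] using hz

theorem ne_zero_of_mem_invUnitStrip {z : ℂ} (hz : z ∈ invUnitStrip) : z ≠ 0 := by
  rintro rfl
  simp [invUnitStrip] at hz

theorem re_ne_zero_of_mem_unitStrip_inter_invUnitStrip {z : ℂ}
    (hz : z ∈ unitStrip ∩ invUnitStrip) : z.re ≠ 0 := by
  intro hre
  obtain ⟨h1, h2⟩ : |z.im| < 1 ∧ |z.im| < normSq z := hz
  rw [normSq_apply, hre, ← abs_mul_abs_self z.im] at h2
  nlinarith [abs_nonneg z.im]

theorem conj_inv_mem_unitStrip {z : ℂ} (hz : z ∈ invUnitStrip) : conj z⁻¹ ∈ unitStrip := by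
  have hpos : 0 < normSq z := normSq_pos.2 (ne_zero_of_mem_invUnitStrip hz)
  change |(conj z⁻¹).im| < 1
  rwa [conj_im, abs_neg, inv_im, abs_div, abs_neg, abs_of_pos hpos, div_lt_one hpos]

theorem mem_invUnitStrip_of_notMem_unitStrip {z : ℂ} (hI : z ≠ I) (hI' : z ≠ -I)
    (hz : z ∉ unitStrip) : z ∈ invUnitStrip := by
  have h_im : 1 ≤ |z.im| := not_lt.1 hz
  change |z.im| < normSq z
  rw [normSq_apply, ← abs_mul_abs_self z.im]
  rcases eq_or_ne z.re 0 with hre | hre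
  · have h_ne : |z.im| ≠ 1 := fun h ↦ (eq_or_eq_neg_of_abs_eq h).elim
      (fun h ↦ hI (Complex.ext hre h)) (fun h ↦ hI' (Complex.ext (by simp [hre]) (by simp [h])))
    nlinarith [h_im.lt_of_ne' h_ne]
  · nlinarith [mul_self_pos.2 hre]

theorem one_le_norm_of_notMem_unitStrip {z : ℂ} (hz : z ∉ unitStrip) : 1 ≤ ‖z‖ :=
  (not_lt.1 hz).trans (abs_im_le_norm z)

theorem convex_unitStrip : Convex ℝ unitStrip := by
  simpa [unitStrip, abs_lt] using! (convex_Ioo (-1 : ℝ) 1).linear_preimage imLm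

/-- The part of `unitStrip ∩ invUnitStrip` in the right half plane; the other half is its image
under negation. -/
def rightOverlap : Set ℂ := unitStrip ∩ invUnitStrip ∩ {z | 0 < z.re}

theorem isOpen_rightOverlap : IsOpen rightOverlap :=
  (isOpen_unitStrip.inter isOpen_invUnitStrip).inter (isOpen_lt continuous_const continuous_re)

theorem ofReal_mem_rightOverlap {t : ℝ} (ht : 0 < t) : (t : ℂ) ∈ rightOverlap :=
  ⟨⟨ofReal_mem_unitStrip t, by simpa [invUnitStrip] using ht.ne'⟩, ht⟩

theorem add_ofReal_mem_rightOverlap {z : ℂ} (hz : z ∈ rightOverlap) {t : ℝ} (ht : 0 ≤ t) :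
    z + t ∈ rightOverlap := by
  obtain ⟨⟨hz1, hz2 : |z.im| < normSq z⟩, hz0 : 0 < z.re⟩ := hz
  refine ⟨⟨by simpa [unitStrip] using! hz1, ?_⟩, by simpa using add_pos_of_pos_of_nonneg hz0 ht⟩
  simp only [invUnitStrip, normSq_apply, mem_ofPred_eq, add_re, add_im, ofReal_re, ofReal_im,
    add_zero] at hz2 ⊢
  nlinarith

theorem isPreconnected_rightOverlap : IsPreconnected rightOverlap := by
  set S : Set ℂ := unitStrip ∩ {z | 1 < z.re}
  have hS : Convex ℝ S := convex_unitStrip.inter (convex_halfSpace_re_gt 1)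
  have hS_sub : S ⊆ rightOverlap := fun z ⟨(hz1 : |z.im| < 1), (hz2 : 1 < z.re)⟩ ↦ by
    refine ⟨⟨hz1, ?_⟩, one_pos.trans hz2⟩
    change |z.im| < normSq z
    rw [normSq_apply]
    nlinarith [mul_self_nonneg z.im]
  refine isPreconnected_of_forall (2 : ℂ) fun z hz ↦
    ⟨segment ℝ z (z + 2) ∪ S, union_subset ?_ hS_sub, .inr (by simp [S, unitStrip]),
      .inl (left_mem_segment ..), ?_⟩
  · rw [segment_eq_image']
    rintro _ ⟨t, ht, rfl⟩
    simpa using add_ofReal_mem_rightOverlap hz (mul_nonneg ht.1 zero_le_two)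
  · refine (convex_segment ..).isPreconnected.union (z + 2) (right_mem_segment ..) ⟨?_, ?_⟩
      hS.isPreconnected
    · simpa [unitStrip] using! hz.1.1
    · have : 0 < z.re := hz.2
      change 1 < (z + 2).re
      rw [add_re, re_ofNat]
      linarith

/-- The reflection of `F` in the unit circle, twisted by `z ^ (-n)`. A function on `unitStrip` with
`F (1 / t) = |t| ^ n * conj (F t)` for real `t ≠ 0` agrees with it on the positive real axis. -/
noncomputable def invReflection (n : ℕ) (F : ℂ → ℂ) (z : ℂ) : ℂ := z⁻¹ ^ n * conj (F (conj z⁻¹))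

section Reflection

variable {n : ℕ} {F : ℂ → ℂ} {C : ℝ}

theorem differentiableOn_invReflection (hF : DifferentiableOn ℂ F unitStrip) :
    DifferentiableOn ℂ (invReflection n F) invUnitStrip := by
  intro z hz
  have h_inv : DifferentiableAt ℂ (·⁻¹) z := differentiableAt_inv (ne_zero_of_mem_invUnitStrip hz)
  have h_conj : DifferentiableAt ℂ (conj ∘ F ∘ conj) z⁻¹ :=
    differentiableAt_conj_conj_iff.2
      (hF.differentiableAt (isOpen_unitStrip.mem_nhds (conj_inv_mem_unitStrip hz)))
  exact ((h_inv.pow n).mul (h_conj.comp z h_inv)).differentiableWithinAt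

theorem norm_invReflection_le (hC : ∀ z ∈ unitStrip, ‖F z‖ ≤ C) {z : ℂ}
    (hz : z ∈ invUnitStrip) (hz' : 1 ≤ ‖z‖) : ‖invReflection n F z‖ ≤ C := by
  rw [invReflection, norm_mul, norm_pow, norm_inv, RCLike.norm_conj]
  exact (mul_le_of_le_one_left (norm_nonneg _) (pow_le_one₀ (by positivity)
    (inv_le_one_of_one_le₀ hz'))).trans (hC _ (conj_inv_mem_unitStrip hz))

theorem eqOn_invReflection_rightOverlap (hF : DifferentiableOn ℂ F unitStrip)
    (h_inv : ∀ t : ℝ, t ≠ 0 → F ↑t⁻¹ = |t| ^ n * conj (F t)) :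
    EqOn F (invReflection n F) rightOverlap := by
  refine eqOn_of_preconnected_of_frequently_eq_ofReal
    ((hF.mono fun z hz ↦ hz.1.1).analyticOnNhd isOpen_rightOverlap)
    (((differentiableOn_invReflection hF).mono fun z hz ↦ hz.1.2).analyticOnNhd
      isOpen_rightOverlap)
    isPreconnected_rightOverlap (ofReal_mem_rightOverlap one_pos) ?_
  have h_pos : ∀ᶠ t : ℝ in 𝓝[≠] 1, 0 < t := nhdsWithin_le_nhds (lt_mem_nhds one_pos)
  refine (h_pos.mono fun t ht ↦ ?_).frequently
  simpa [invReflection, abs_of_pos ht] using h_inv t⁻¹ (inv_ne_zero ht.ne')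

/-- For `re z < 0` the two functions differ by the sign `(-1) ^ n`, coming from `|t| ^ n` in
`h_inv`; this is why they are compared after squaring. -/
theorem sq_eq_sq_invReflection (hF : DifferentiableOn ℂ F unitStrip)
    (h_inv : ∀ t : ℝ, t ≠ 0 → F ↑t⁻¹ = |t| ^ n * conj (F t)) {z : ℂ}
    (hz : z ∈ unitStrip ∩ invUnitStrip) : F z ^ 2 = invReflection n F z ^ 2 := by
  rcases (re_ne_zero_of_mem_unitStrip_inter_invUnitStrip hz).lt_or_gt with hre | hre
  · have hF_neg : DifferentiableOn ℂ (fun w ↦ F (-w)) unitStrip :=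
      hF.comp differentiable_id.neg.differentiableOn fun w ↦ neg_mem_unitStrip
    have h := eqOn_invReflection_rightOverlap (n := n) hF_neg
      (fun t ht ↦ by simpa using h_inv (-t) (neg_ne_zero.2 ht))
      (x := -z) ⟨⟨neg_mem_unitStrip hz.1, neg_mem_invUnitStrip hz.2⟩, by simpa using hre⟩
    simp only [invReflection, neg_neg, inv_neg, map_neg] at h ⊢
    rw [h, mul_pow, mul_pow, ← pow_mul, ← pow_mul, mul_comm n, pow_mul, neg_sq, ← pow_mul]
  · rw [eqOn_invReflection_rightOverlap hF h_inv ⟨hz, hre⟩]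

theorem exists_sq_eq_const_of_invReflection (hF : DifferentiableOn ℂ F unitStrip)
    (hC : ∀ z ∈ unitStrip, ‖F z‖ ≤ C)
    (h_inv : ∀ t : ℝ, t ≠ 0 → F ↑t⁻¹ = |t| ^ n * conj (F t)) :
    ∃ c, ∀ z ∈ unitStrip, F z ^ 2 = c := by
  classical
  set H : ℂ → ℂ := unitStrip.piecewise (F · ^ 2) (invReflection n F · ^ 2)
  have hH_strip : EqOn H (F · ^ 2) unitStrip := piecewise_eqOn ..
  have hH_inv : EqOn H (invReflection n F · ^ 2) invUnitStrip := fun z hz ↦ by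
    by_cases hz' : z ∈ unitStrip
    · exact (hH_strip hz').trans (sq_eq_sq_invReflection hF h_inv ⟨hz', hz⟩)
    · exact piecewise_eq_of_notMem _ _ _ hz'
  have h_cover {z : ℂ} (hz : z ∉ ({I, -I} : Finset ℂ)) (hz' : z ∉ unitStrip) :
      z ∈ invUnitStrip := by
    rw [Finset.mem_insert, Finset.mem_singleton, not_or] at hz
    exact mem_invUnitStrip_of_notMem_unitStrip hz.1 hz.2 hz'
  have hH_diff : DifferentiableOn ℂ H (↑({I, -I} : Finset ℂ))ᶜ := fun z hz ↦ by
    refine DifferentiableAt.differentiableWithinAt ?_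
    by_cases hz' : z ∈ unitStrip
    · exact ((hF.pow 2).congr hH_strip).differentiableAt (isOpen_unitStrip.mem_nhds hz')
    · exact (((differentiableOn_invReflection hF).pow 2).congr hH_inv).differentiableAt
        (isOpen_invUnitStrip.mem_nhds (h_cover hz hz'))
  have hH_bound (z : ℂ) (hz : z ∉ ({I, -I} : Finset ℂ)) : ‖H z‖ ≤ C ^ 2 := by
    by_cases hz' : z ∈ unitStrip
    · rw [hH_strip hz', norm_pow]
      gcongr
      exact hC z hz'
    · have hz_inv := h_cover hz hz'
      rw [hH_inv hz_inv, norm_pow]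
      gcongr
      exact norm_invReflection_le hC hz_inv (one_le_norm_of_notMem_unitStrip hz')
  obtain ⟨c, hc⟩ := exists_const_of_differentiableOn_compl_finset_of_bounded _ hH_diff hH_bound
  refine ⟨c, fun z hz ↦ (hH_strip hz).symm.trans (hc z fun hzI ↦ ?_)⟩
  rw [Finset.mem_insert, Finset.mem_singleton] at hzI
  rcases hzI with rfl | rfl <;> simp [unitStrip] at hz

theorem eqOn_zero_of_invReflection (hn : n ≠ 0) (hF : DifferentiableOn ℂ F unitStrip)
    (hC : ∀ z ∈ unitStrip, ‖F z‖ ≤ C)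
    (h_inv : ∀ t : ℝ, t ≠ 0 → F ↑t⁻¹ = |t| ^ n * conj (F t)) :
    EqOn F 0 unitStrip := by
  obtain ⟨c, hc⟩ := exists_sq_eq_const_of_invReflection hF hC h_inv
  have hc' (t : ℝ) : ‖F t‖ ^ 2 = ‖c‖ := by rw [← hc t (ofReal_mem_unitStrip t), norm_pow]
  have h_two : ‖F ↑(2⁻¹ : ℝ)‖ = 2 ^ n * ‖F (2 : ℝ)‖ := by
    rw [h_inv 2 two_ne_zero]
    simp
  have hc0 : ‖c‖ = (2 ^ n) ^ 2 * ‖c‖ := by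
    rw [← hc' 2, ← mul_pow, ← h_two, hc', hc']
  have h_one_lt : (1 : ℝ) < (2 ^ n) ^ 2 :=
    one_lt_pow₀ (one_lt_pow₀ one_lt_two hn) two_ne_zero
  have hc_zero : c = 0 := norm_eq_zero.1 (by nlinarith [norm_nonneg c])
  exact fun z hz ↦ pow_eq_zero_iff two_ne_zero |>.1 ((hc z hz).trans hc_zero)

end Reflection

section ExponentialIntegral

variable {α E : Type*} [MeasurableSpace α] {μ : Measure α} [NormedAddCommGroup E]
  [NormedSpace ℂ E] {s : α → ℝ} {k : α → E}

theorem norm_cexp_I_mul_ofReal_le (z : ℂ) (t : ℝ) : ‖cexp (I * z * t)‖ ≤ rexp (|z.im| * |t|) := by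
  rw [norm_exp, ← abs_mul]
  exact Real.exp_le_exp.2 (by simpa using neg_le_abs (z.im * t))

theorem norm_cexp_smul_le {z : ℂ} (hz : |z.im| ≤ 1) (t : ℝ) (v : E) :
    ‖cexp (I * z * t) • v‖ ≤ rexp |t| * ‖v‖ := by
  rw [norm_smul]
  gcongr
  exact (norm_cexp_I_mul_ofReal_le z t).trans
    (Real.exp_le_exp.2 (mul_le_of_le_one_left (abs_nonneg t) hz))

theorem aestronglyMeasurable_cexp_smul (hs : AEStronglyMeasurable s μ)
    (hk : AEStronglyMeasurable k μ) (z : ℂ) :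
    AEStronglyMeasurable (fun a ↦ cexp (I * z * s a) • k a) μ :=
  (continuous_exp.comp_aestronglyMeasurable
    ((continuous_ofReal.comp_aestronglyMeasurable hs).const_mul (I * z))).smul hk

theorem integrable_cexp_smul (hs : AEStronglyMeasurable s μ) (hk : AEStronglyMeasurable k μ)
    (hsk : Integrable (fun a ↦ rexp |s a| * ‖k a‖) μ) {z : ℂ} (hz : |z.im| ≤ 1) :
    Integrable (fun a ↦ cexp (I * z * s a) • k a) μ :=
  hsk.mono' (aestronglyMeasurable_cexp_smul hs hk z)
    (.of_forall fun a ↦ norm_cexp_smul_le hz (s a) (k a))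

theorem exp_mul_mul_self_le {r t : ℝ} (hr : r < 1) : rexp (r * t) * t ≤ (1 - r)⁻¹ * rexp t := by
  have hr' : 0 < 1 - r := sub_pos.2 hr
  have h_lin : t ≤ (1 - r)⁻¹ * rexp ((1 - r) * t) := by
    rw [inv_mul_eq_div, le_div_iff₀ hr']
    linarith [Real.add_one_le_exp ((1 - r) * t)]
  calc rexp (r * t) * t ≤ rexp (r * t) * ((1 - r)⁻¹ * rexp ((1 - r) * t)) := by gcongr
    _ = (1 - r)⁻¹ * (rexp (r * t) * rexp ((1 - r) * t)) := by ring
    _ = (1 - r)⁻¹ * rexp t := by rw [← Real.exp_add]; ring_nf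

theorem differentiableOn_integral_cexp_smul (hs : AEStronglyMeasurable s μ)
    (hk : AEStronglyMeasurable k μ) (hsk : Integrable (fun a ↦ rexp |s a| * ‖k a‖) μ) :
    DifferentiableOn ℂ (fun z : ℂ ↦ ∫ a, cexp (I * z * s a) • k a ∂μ) unitStrip := by
  intro z (hz : |z.im| < 1)
  obtain ⟨r, hzr, hr⟩ := exists_between hz
  have h_nhds : {w : ℂ | |w.im| < r} ∈ 𝓝 z :=
    (isOpen_lt continuous_im.abs continuous_const).mem_nhds hzr
  have h_deriv (a : α) (w : ℂ) : HasDerivAt (fun w ↦ cexp (I * w * s a) • k a)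
      (cexp (I * w * s a) • (I * s a) • k a) w := by
    have h : HasDerivAt (fun w : ℂ ↦ I * w * s a) (I * s a) w := by
      simpa using ((hasDerivAt_id w).const_mul I).mul_const (s a : ℂ)
    simpa only [mul_smul] using! h.cexp.smul_const (k a)
  have h_bound (a : α) (w : ℂ) (hw : |w.im| < r) :
      ‖cexp (I * w * s a) • (I * s a) • k a‖ ≤ (1 - r)⁻¹ * (rexp |s a| * ‖k a‖) := by
    have h_exp : ‖cexp (I * w * s a)‖ ≤ rexp (r * |s a|) :=
      (norm_cexp_I_mul_ofReal_le w (s a)).trans (Real.exp_le_exp.2 (by gcongr))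
    calc ‖cexp (I * w * s a) • (I * s a) • k a‖
        = ‖cexp (I * w * s a)‖ * |s a| * ‖k a‖ := by simp [norm_smul, mul_assoc]
      _ ≤ rexp (r * |s a|) * |s a| * ‖k a‖ := by gcongr
      _ ≤ (1 - r)⁻¹ * rexp |s a| * ‖k a‖ := by grw [exp_mul_mul_self_le hr]
      _ = (1 - r)⁻¹ * (rexp |s a| * ‖k a‖) := mul_assoc ..
  have h_meas : AEStronglyMeasurable (fun a ↦ cexp (I * z * s a) • (I * s a) • k a) μ :=
    aestronglyMeasurable_cexp_smul hs
      (((continuous_ofReal.comp_aestronglyMeasurable hs).const_mul I).smul hk) z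
  exact (hasDerivAt_integral_of_dominated_loc_of_deriv_le h_nhds
    (.of_forall (aestronglyMeasurable_cexp_smul hs hk)) (integrable_cexp_smul hs hk hsk hz.le)
    h_meas (.of_forall h_bound) (hsk.const_mul _)
    (.of_forall fun a w _ ↦ h_deriv a w)).2.differentiableAt.differentiableWithinAt

end ExponentialIntegral

section Inversion

variable {V E : Type*} [NormedAddCommGroup V] [InnerProductSpace ℝ V] [FiniteDimensional ℝ V]
  [MeasurableSpace V] [BorelSpace V] [NormedAddCommGroup E] [NormedSpace ℂ E]

theorem continuous_fourier_of_integrable {f : V → E} (hf : Integrable f) : Continuous (𝓕 f) :=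
  VectorFourier.fourierIntegral_continuous Real.continuous_fourierChar
    (L := innerₗ V) continuous_inner hf

theorem continuous_fourierInv_of_integrable {f : V → E} (hf : Integrable f) :
    Continuous (𝓕⁻ f) := by
  rw [Real.fourierInv_eq_fourier_comp_neg]
  exact continuous_fourier_of_integrable hf.comp_neg

variable [CompleteSpace E]

theorem integral_fourier_smul_eq_integral_smul_fourier {f : V → ℂ} {g : V → E}
    (hf : Integrable f) (hg : Integrable g) : ∫ x, 𝓕 f x • g x = ∫ x, f x • 𝓕 g x := by
  have := VectorFourier.integral_fourierIntegral_smul_eq_flip (L := innerₗ V)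
    Real.continuous_fourierChar continuous_inner hf hg
  rwa [flip_innerₗ] at this

theorem integral_fourierInv_smul_eq_integral_smul_fourierInv {f : V → ℂ} {g : V → E}
    (hf : Integrable f) (hg : Integrable g) : ∫ x, 𝓕⁻ f x • g x = ∫ x, f x • 𝓕⁻ g x := by
  calc ∫ x, 𝓕⁻ f x • g x = ∫ x, 𝓕 f x • g (-x) := by
        rw [← integral_neg_eq_self]
        simp only [Real.fourierInv_eq_fourier_neg, neg_neg]
    _ = ∫ x, f x • 𝓕⁻ g x := by
        rw [integral_fourier_smul_eq_integral_smul_fourier hf hg.comp_neg,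
          Real.fourierInv_eq_fourier_comp_neg]

theorem fourierInv_fourier_ae_eq {f : V → E} (hf : Integrable f)
    (hf' : Integrable (𝓕 f)) : 𝓕⁻ (𝓕 f) =ᵐ[volume] f := by
  refine ae_eq_of_integral_contDiff_smul_eq
    (continuous_fourierInv_of_integrable hf').locallyIntegrable hf.locallyIntegrable
    fun φ hφ hφ_supp ↦ ?_
  have hψ_supp : HasCompactSupport (ofRealCLM ∘ φ) := hφ_supp.comp_left rfl
  set ψ := hψ_supp.toSchwartzMap (by fun_prop)
  have hψ (x : V) (v : E) : φ x • v = ψ x • v := by simp [ψ]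
  have hψ_inv : Integrable (𝓕⁻ (ψ : V → ℂ)) := by
    rw [← SchwartzMap.fourierInv_coe]
    exact (𝓕⁻ ψ).integrable
  simp only [hψ]
  rw [← integral_fourierInv_smul_eq_integral_smul_fourierInv ψ.integrable hf',
    ← integral_fourier_smul_eq_integral_smul_fourier hψ_inv hf,
    ← SchwartzMap.fourierInv_coe, ← SchwartzMap.fourier_coe,
    FourierTransform.fourier_fourierInv_eq]

end Inversion

section Beurling

variable {V E : Type*} [NormedAddCommGroup V] [InnerProductSpace ℝ V] [FiniteDimensional ℝ V]
  [MeasurableSpace V] [BorelSpace V] [NormedAddCommGroup E] {f φ : V → E}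

/-- Beurling's condition `∬ ‖f x‖ ‖φ y‖ exp (2π |⟪x, y⟫|) dx dy < ∞` on a pair of functions; the
factor `2π` matches the normalisation of `𝓕` for `φ = 𝓕 f`. -/
def BeurlingCondition (f φ : V → E) : Prop :=
  Integrable (fun p : V × V ↦ rexp |2 * π * ⟪p.1, p.2⟫_ℝ| * (‖f p.1‖ * ‖φ p.2‖))

theorem BeurlingCondition.congr_ae (h : BeurlingCondition f φ) {f' φ' : V → E}
    (hf : f =ᵐ[volume] f') (hφ : φ =ᵐ[volume] φ') : BeurlingCondition f' φ' := by
  refine Integrable.congr h ?_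
  filter_upwards [Measure.quasiMeasurePreserving_fst.ae_eq_comp hf,
    Measure.quasiMeasurePreserving_snd.ae_eq_comp hφ] with p hfp hφp
  simp only [comp_apply] at hfp hφp
  rw [hfp, hφp]

theorem BeurlingCondition.integrable_right (h : BeurlingCondition f φ)
    (hφ : AEStronglyMeasurable φ) (hf : ¬f =ᵐ[volume] 0) : Integrable φ := by
  obtain ⟨x, hfx, hx⟩ := ((not_eventually.1 hf).and_eventually h.prod_right_ae).exists
  have hfx' : 0 < ‖f x‖ := norm_pos_iff.2 hfx
  refine (hx.const_mul ‖f x‖⁻¹).mono' hφ (.of_forall fun y ↦ ?_)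
  calc ‖φ y‖ = ‖f x‖⁻¹ * (1 * (‖f x‖ * ‖φ y‖)) := by field_simp
    _ ≤ ‖f x‖⁻¹ * (rexp |2 * π * ⟪x, y⟫_ℝ| * (‖f x‖ * ‖φ y‖)) := by
        gcongr
        exact Real.one_le_exp (abs_nonneg _)

variable [InnerProductSpace ℂ E]

/-- Hedenmalm's transform `z ↦ ∬ exp (2πiz⟪x, y⟫) ⟪f x, φ y⟫ dx dy` of a pair of functions. -/
noncomputable def beurlingTransform (f φ : V → E) (z : ℂ) : ℂ :=
  ∫ p : V × V, cexp (I * z * (2 * π * ⟪p.1, p.2⟫_ℝ : ℝ)) • ⟪f p.1, φ p.2⟫_ℂ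

theorem BeurlingCondition.integrable_exp_mul_norm_inner (h : BeurlingCondition f φ)
    (hf : AEStronglyMeasurable f) (hφ : AEStronglyMeasurable φ) :
    Integrable (fun p : V × V ↦ rexp |2 * π * ⟪p.1, p.2⟫_ℝ| * ‖⟪f p.1, φ p.2⟫_ℂ‖) := by
  refine h.mono' ?_ (.of_forall fun p ↦ ?_)
  · exact (by fun_prop : Continuous fun p : V × V ↦
      rexp |2 * π * ⟪p.1, p.2⟫_ℝ|).aestronglyMeasurable.mul (hf.comp_fst.inner hφ.comp_snd).norm
  · rw [norm_mul, norm_norm, Real.norm_of_nonneg (Real.exp_nonneg _)]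
    gcongr
    exact norm_inner_le_norm ..

theorem aestronglyMeasurable_two_pi_inner :
    AEStronglyMeasurable (fun p : V × V ↦ 2 * π * ⟪p.1, p.2⟫_ℝ) :=
  (by fun_prop : Continuous _).aestronglyMeasurable

theorem BeurlingCondition.integrable_cexp_smul_inner (h : BeurlingCondition f φ)
    (hf : AEStronglyMeasurable f) (hφ : AEStronglyMeasurable φ) {z : ℂ} (hz : |z.im| ≤ 1) :
    Integrable (fun p : V × V ↦
      cexp (I * z * (2 * π * ⟪p.1, p.2⟫_ℝ : ℝ)) • ⟪f p.1, φ p.2⟫_ℂ) :=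
  integrable_cexp_smul aestronglyMeasurable_two_pi_inner (hf.comp_fst.inner hφ.comp_snd)
    (h.integrable_exp_mul_norm_inner hf hφ) hz

theorem BeurlingCondition.differentiableOn_beurlingTransform (h : BeurlingCondition f φ)
    (hf : AEStronglyMeasurable f) (hφ : AEStronglyMeasurable φ) :
    DifferentiableOn ℂ (beurlingTransform f φ) unitStrip :=
  differentiableOn_integral_cexp_smul aestronglyMeasurable_two_pi_inner
    (hf.comp_fst.inner hφ.comp_snd) (h.integrable_exp_mul_norm_inner hf hφ)

theorem BeurlingCondition.norm_beurlingTransform_le (h : BeurlingCondition f φ)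
    (hf : AEStronglyMeasurable f) (hφ : AEStronglyMeasurable φ) {z : ℂ} (hz : z ∈ unitStrip) :
    ‖beurlingTransform f φ z‖ ≤
      ∫ p : V × V, rexp |2 * π * ⟪p.1, p.2⟫_ℝ| * ‖⟪f p.1, φ p.2⟫_ℂ‖ :=
  norm_integral_le_of_norm_le (h.integrable_exp_mul_norm_inner hf hφ)
    (.of_forall fun _ ↦ norm_cexp_smul_le (le_of_lt hz) _ _)

theorem integral_inner_comp_inv_smul (f : V → E) {t : ℝ} (ht : t ≠ 0) :
    ∫ x, ⟪f x, f (t⁻¹ • x)⟫_ℂ = |t| ^ finrank ℝ V * conj (∫ x, ⟪f x, f (t • x)⟫_ℂ) := by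
  have h := Measure.integral_comp_inv_smul volume (fun x ↦ ⟪f (t • x), f x⟫_ℂ) t
  simp only [smul_inv_smul₀ ht] at h
  rw [h, ← integral_conj]
  simp [inner_conj_symm]

variable [CompleteSpace E]

theorem integral_cexp_smul_inner_eq_inner_fourierInv (v : E) (hφ : Integrable φ) (x : V) (t : ℝ) :
    ∫ y, cexp (I * t * (2 * π * ⟪x, y⟫_ℝ : ℝ)) • ⟪v, φ y⟫_ℂ = ⟪v, 𝓕⁻ φ (t • x)⟫_ℂ := by
  have h_int : Integrable fun y ↦ cexp (↑(2 * π * ⟪y, t • x⟫_ℝ) * I) • φ y := by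
    refine (integrable_norm_iff ?_).1 ?_
    · exact (by fun_prop : Continuous fun y : V ↦
        cexp (↑(2 * π * ⟪y, t • x⟫_ℝ) * I)).aestronglyMeasurable.smul hφ.1
    · simpa only [norm_smul, norm_exp_ofReal_mul_I, one_mul] using hφ.norm
  rw [Real.fourierInv_eq', ← integral_inner h_int]
  refine integral_congr_ae (.of_forall fun y ↦ ?_)
  simp only [inner_smul_right, smul_eq_mul, real_inner_comm x y]
  push_cast
  ring_nf

theorem BeurlingCondition.beurlingTransform_ofReal (h : BeurlingCondition f φ)
    (hf : AEStronglyMeasurable f) (hφ : Integrable φ) (t : ℝ) :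
    beurlingTransform f φ t = ∫ x, ⟪f x, 𝓕⁻ φ (t • x)⟫_ℂ := by
  have h_int := h.integrable_cexp_smul_inner hf hφ.1 (z := t) (by simp)
  rw [beurlingTransform, Measure.volume_eq_prod, integral_prod _ h_int]
  simp only [integral_cexp_smul_inner_eq_inner_fourierInv _ hφ]

theorem BeurlingCondition.integrable_inner_fourierInv (h : BeurlingCondition f φ)
    (hf : AEStronglyMeasurable f) (hφ : Integrable φ) (t : ℝ) :
    Integrable fun x ↦ ⟪f x, 𝓕⁻ φ (t • x)⟫_ℂ := by
  have h_int := (h.integrable_cexp_smul_inner hf hφ.1 (z := t) (by simp)).integral_prod_left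
  simpa only [integral_cexp_smul_inner_eq_inner_fourierInv _ hφ] using h_int

theorem BeurlingCondition.beurlingTransform_fourier_ofReal (h : BeurlingCondition f (𝓕 f))
    (hc : Continuous f) (hf : Integrable f) (hf' : Integrable (𝓕 f)) (t : ℝ) :
    beurlingTransform f (𝓕 f) t = ∫ x, ⟪f x, f (t • x)⟫_ℂ := by
  rw [h.beurlingTransform_ofReal hf.1 hf', hc.fourierInv_fourier_eq hf hf']

theorem BeurlingCondition.integrable_norm_sq (h : BeurlingCondition f (𝓕 f))
    (hc : Continuous f) (hf : Integrable f) (hf' : Integrable (𝓕 f)) :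
    Integrable fun x ↦ ‖f x‖ ^ 2 := by
  have h_inner := (h.integrable_inner_fourierInv hf.1 hf' 1).norm
  rw [hc.fourierInv_fourier_eq hf hf'] at h_inner
  simpa [inner_self_eq_norm_sq_to_K] using h_inner

variable [Nontrivial V]

theorem BeurlingCondition.eqOn_beurlingTransform_zero (h : BeurlingCondition f (𝓕 f))
    (hc : Continuous f) (hf : Integrable f) (hf' : Integrable (𝓕 f)) :
    EqOn (beurlingTransform f (𝓕 f)) 0 unitStrip :=
  eqOn_zero_of_invReflection (finrank_pos (R := ℝ) (M := V)).ne'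
    (h.differentiableOn_beurlingTransform hf.1 hf'.1)
    (fun _ ↦ h.norm_beurlingTransform_le hf.1 hf'.1) fun t ht ↦ by
      simp only [h.beurlingTransform_fourier_ofReal hc hf hf', integral_inner_comp_inv_smul f ht]

theorem BeurlingCondition.eq_zero_of_continuous (h : BeurlingCondition f (𝓕 f))
    (hc : Continuous f) (hf : Integrable f) (hf' : Integrable (𝓕 f)) : f = 0 := by
  have h_one : ∫ x, ⟪f x, f x⟫_ℂ = 0 := by
    simpa only [one_smul] using! (h.beurlingTransform_fourier_ofReal hc hf hf' 1).symm.trans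
      (h.eqOn_beurlingTransform_zero hc hf hf' (ofReal_mem_unitStrip 1))
  have h_norm : ∫ x, ‖f x‖ ^ 2 = 0 := by
    simpa [inner_self_eq_norm_sq_to_K, ← ofReal_pow, integral_complex_ofReal] using h_one
  rw [integral_eq_zero_iff_of_nonneg (fun _ ↦ by positivity) (h.integrable_norm_sq hc hf hf')]
    at h_norm
  refine (hc.ae_eq_iff_eq volume continuous_zero).1 (h_norm.mono fun x hx ↦ ?_)
  simpa using hx

theorem BeurlingCondition.ae_eq_zero (h : BeurlingCondition f (𝓕 f)) (hf : Integrable f) :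
    f =ᵐ[volume] 0 := by
  by_contra hf0
  have hf' : Integrable (𝓕 f) :=
    h.integrable_right (continuous_fourier_of_integrable hf).aestronglyMeasurable hf0
  have h_ae : 𝓕⁻ (𝓕 f) =ᵐ[volume] f := fourierInv_fourier_ae_eq hf hf'
  have h_fourier : 𝓕 (𝓕⁻ (𝓕 f)) = 𝓕 f := funext (Real.fourier_congr_ae h_ae)
  have h_zero : 𝓕⁻ (𝓕 f) = 0 :=
    eq_zero_of_continuous (by rw [h_fourier]; exact h.congr_ae h_ae.symm .rfl)
      (continuous_fourierInv_of_integrable hf') (hf.congr h_ae.symm) (by rwa [h_fourier])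
  exact hf0 (h_ae.symm.trans (.of_eq h_zero))

end Beurling

theorem lintegral_comp_smul_addHaar {V : Type*} [NormedAddCommGroup V] [NormedSpace ℝ V]
    [FiniteDimensional ℝ V] [MeasurableSpace V] [BorelSpace V] (μ : Measure V)
    [μ.IsAddHaarMeasure] (f : V → ENNReal) {r : ℝ} (hr : r ≠ 0) :
    ∫⁻ x, f (r • x) ∂μ = ENNReal.ofReal |(r ^ finrank ℝ V)⁻¹| * ∫⁻ x, f x ∂μ := by
  have h := lintegral_map_equiv (μ := μ) f (MeasurableEquiv.smul₀ r hr)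
  rw [MeasurableEquiv.coe_smul₀, Measure.map_addHaar_smul μ hr, lintegral_smul_measure] at h
  exact h.symm

theorem fourier_eq_integral_cexp_two_pi_smul {V E : Type*} [NormedAddCommGroup V]
    [InnerProductSpace ℝ V] [FiniteDimensional ℝ V] [MeasurableSpace V] [BorelSpace V]
    [NormedAddCommGroup E] [NormedSpace ℂ E] (g : V → E) (y : V) :
    𝓕 g y = ∫ t, cexp (-(I * ⟪(2 * π) • y, t⟫_ℝ)) • g t := by
  rw [Real.fourier_eq']
  congr with t
  rw [real_inner_smul_left, real_inner_comm y]
  push_cast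
  ring_nf

theorem beurling_reformulated_general {V E : Type*} [NormedAddCommGroup V] [InnerProductSpace ℝ V]
    [FiniteDimensional ℝ V] [Nontrivial V] [MeasurableSpace V] [BorelSpace V]
    [NormedAddCommGroup E] [InnerProductSpace ℂ E] [CompleteSpace E]
    (g : V → E) (hg : Integrable g)
    (G : V → E) (hG : ∀ l, G l = ∫ t, cexp (-(I * ⟪l, t⟫_ℝ)) • g t)
    (M : V → ENNReal) (hM : ∀ l, M l = ∫⁻ x, ENNReal.ofReal (‖g x‖ * rexp |⟪l, x⟫_ℝ|))
    (h : ∫⁻ l, M l * ENNReal.ofReal ‖G l‖ < ⊤) :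
    g =ᵐ[volume] 0 := by
  suffices BeurlingCondition g (𝓕 g) from this.ae_eq_zero hg
  have h_meas : AEStronglyMeasurable
      fun p : V × V ↦ rexp |2 * π * ⟪p.1, p.2⟫_ℝ| * (‖g p.1‖ * ‖𝓕 g p.2‖) :=
    (by fun_prop : Continuous fun p : V × V ↦ rexp |2 * π * ⟪p.1, p.2⟫_ℝ|).aestronglyMeasurable.mul
      (hg.1.norm.comp_fst.mul
        (continuous_fourier_of_integrable hg).norm.aestronglyMeasurable.comp_snd)
  refine ⟨h_meas, (hasFiniteIntegral_iff_ofReal (.of_forall fun p ↦ by positivity)).2 ?_⟩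
  calc ∫⁻ p : V × V, ENNReal.ofReal (rexp |2 * π * ⟪p.1, p.2⟫_ℝ| * (‖g p.1‖ * ‖𝓕 g p.2‖))
      = ∫⁻ y, M ((2 * π) • y) * ENNReal.ofReal ‖G ((2 * π) • y)‖ := by
        rw [Measure.volume_eq_prod, lintegral_prod_symm _ h_meas.aemeasurable.ennreal_ofReal]
        congr with y
        rw [hM, hG, ← fourier_eq_integral_cexp_two_pi_smul,
          ← lintegral_mul_const' _ _ ENNReal.ofReal_ne_top]
        congr with x
        rw [← ENNReal.ofReal_mul (by positivity), real_inner_smul_left, real_inner_comm x y]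
        ring_nf
    _ = ENNReal.ofReal |((2 * π) ^ finrank ℝ V)⁻¹| * ∫⁻ l, M l * ENNReal.ofReal ‖G l‖ :=
        lintegral_comp_smul_addHaar volume (fun l ↦ M l * ENNReal.ofReal ‖G l‖)
          Real.two_pi_pos.ne'
    _ < ⊤ := ENNReal.mul_lt_top ENNReal.ofReal_lt_top h

theorem beurling_reformulated (g : ℝ → ℂ) (hg : Integrable g)
    (G : ℝ → ℂ)
    (hG : ∀ l : ℝ, G l = ∫ t : ℝ, g t * Complex.exp (-(Complex.I * l * t)))
    (M : ℝ → ENNReal)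
    (hM : ∀ l : ℝ, M l = ∫⁻ x : ℝ, ENNReal.ofReal (‖g x‖ * Real.exp (|l| * |x|)))
    (h : (∫⁻ l : ℝ, M l * ENNReal.ofReal ‖G l‖) < ⊤) :
    g =ᵐ[volume] 0 :=
  beurling_reformulated_general g hg G (fun l ↦ by simp [hG, mul_comm, mul_left_comm]) M
    (fun l ↦ by simp [hM, abs_mul, mul_comm]) h
end

section
/- Let f ∈ L¹(ℝ), 1 < p < ∞, 1/p + 1/q = 1, α, β > 0 with αβ ≥ 1. Suppose ∫_ℝ |f(x)| e^{(α|x|)^p / p} dx < ∞ and ∫_ℝ |f̃(λ)| e^{(β|λ|)^q / q} dλ < ∞. Then f = 0 almost everywhere. -/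
/-!
By Young's inequality `|x| |y| ≤ αβ |x| |y| ≤ (α|x|)^p / p + (β|y|)^q / q`, the two hypotheses make
Beurling's integral `∬ |f(x)| |f̂(y)| e^{|xy|} dx dy` finite, so it suffices to prove Beurling's
uniqueness theorem, by Hörmander's argument. Multiplying `f` by `e^{-x²/2}` at most doubles
Beurling's integral and turns the transform into an entire function `g` of order two such that
`‖g(z)‖ ≤ M(|Im z|)` and `‖g‖ M(|·|)` is integrable on the line, where
`M(t) = ∫ e^{t|x|} e^{-x²/2} |f(x)| dx`. A primitive of `g(u) g(iu)` vanishing at `0` is therefore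
bounded on the two coordinate axes. Order two is critical for Phragmén–Lindelöf in a quadrant, but
replacing `g(u)` by `g(e^{-iθ}u)` gives the same bound on the boundary of a sector of opening
`π/2 - θ`, where the principle applies; letting `θ → 0`, the primitive is bounded on the plane,
hence constant by Liouville's theorem. So `g(u) g(iu) = 0`, `g = 0`, and `f = 0` almost everywhere.
-/

open MeasureTheory

section RadialPrimitive

open Complex

variable {E : Type*} [NormedAddCommGroup E] [NormedSpace ℂ E] {h : ℂ → E}

/-- The primitive `∫₀ᶻ h` of an entire function, with the integral taken along the segment from
`0` to `z`. -/
noncomputable def radialPrimitive (h : ℂ → E) (z : ℂ) : E :=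
  z • ∫ t in (0 : ℝ)..1, h (t * z)

theorem hasDerivAt_radialPrimitive [CompleteSpace E] (hh : Differentiable ℂ h) (z : ℂ) :
    HasDerivAt (radialPrimitive h) (h z) z := by
  obtain ⟨P, hP⟩ := hh.isExactOn_univ
  have radialPrimitive_eq (w : ℂ) : radialPrimitive h w = P w - P 0 := by
    have hderiv (t : ℝ) : HasDerivAt (fun t : ℝ ↦ P (t * w)) (w • h (t * w)) t := by
      have hline : HasDerivAt (fun t : ℝ ↦ (t : ℂ) * w) w t := by
        simpa only [id, ofReal_one, one_mul] using (hasDerivAt_id t).ofReal_comp.mul_const w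
      exact (hP (t * w) trivial).scomp t hline
    have hcont : Continuous fun t : ℝ ↦ w • h (t * w) := by
      have := hh.continuous
      fun_prop
    rw [radialPrimitive, ← intervalIntegral.integral_smul,
      intervalIntegral.integral_eq_sub_of_hasDerivAt (fun t _ ↦ hderiv t)
        (hcont.intervalIntegrable 0 1)]
    simp only [ofReal_one, one_mul, ofReal_zero, zero_mul]
  rw [funext radialPrimitive_eq]
  exact (hP z trivial).sub_const (P 0)

theorem radialPrimitive_mul (h : ℂ → E) (c z : ℂ) :
    radialPrimitive h (c * z) = c • radialPrimitive (fun u ↦ h (c * u)) z := by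
  simp only [radialPrimitive, mul_smul, mul_left_comm]

theorem radialPrimitive_ofReal_mul (h : ℂ → E) (r : ℝ) (u : ℂ) :
    radialPrimitive h (r * u) = u • ∫ t in (0 : ℝ)..r, h (t * u) := by
  have hscale := intervalIntegral.smul_integral_comp_mul_right (a := 0) (b := 1)
    (fun t : ℝ ↦ h (t * u)) r
  rw [zero_mul, one_mul] at hscale
  rw [← hscale, radialPrimitive, mul_smul, smul_comm, coe_smul]
  simp only [ofReal_mul, mul_assoc]

theorem norm_radialPrimitive_le_integral {u : ℂ} (hu : ‖u‖ = 1) {m : ℝ → ℝ} (hm : Integrable m)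
    (hm_nonneg : 0 ≤ m) (hle : ∀ t : ℝ, 0 ≤ t → ‖h (t * u)‖ ≤ m t) {r : ℝ} (hr : 0 ≤ r) :
    ‖radialPrimitive h (r * u)‖ ≤ ∫ t, m t := by
  rw [radialPrimitive_ofReal_mul, norm_smul, hu, one_mul]
  calc ‖∫ t in (0 : ℝ)..r, h (t * u)‖ ≤ ∫ t in (0 : ℝ)..r, m t :=
        intervalIntegral.norm_integral_le_of_norm_le hr
          (ae_of_all _ fun t ht ↦ hle t ht.1.le) hm.intervalIntegrable
    _ = ∫ t in Set.Ioc 0 r, m t := intervalIntegral.integral_of_le hr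
    _ ≤ ∫ t, m t := setIntegral_le_integral hm (ae_of_all _ hm_nonneg)

theorem norm_radialPrimitive_le_exp {A B : ℝ} (hB : 0 ≤ B)
    (hle : ∀ z, ‖h z‖ ≤ A * Real.exp (B * ‖z‖ ^ 2)) (z : ℂ) :
    ‖radialPrimitive h z‖ ≤ A * Real.exp ((B + 1) * ‖z‖ ^ 2) := by
  have hA : 0 ≤ A := by simpa using (norm_nonneg _).trans (hle 0)
  have hint : ‖∫ t in (0 : ℝ)..1, h (t * z)‖ ≤ A * Real.exp (B * ‖z‖ ^ 2) := by
    have hsegment (t : ℝ) (ht : t ∈ Set.uIoc 0 1) :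
        ‖h (t * z)‖ ≤ A * Real.exp (B * ‖z‖ ^ 2) := by
      rw [Set.uIoc_of_le zero_le_one] at ht
      refine (hle _).trans ?_
      gcongr
      rw [norm_mul, norm_real, Real.norm_of_nonneg ht.1.le]
      exact mul_le_of_le_one_left (norm_nonneg z) ht.2
    simpa using intervalIntegral.norm_integral_le_of_norm_le_const hsegment
  have hz : ‖z‖ ≤ Real.exp (‖z‖ ^ 2) := by
    nlinarith [Real.add_one_le_exp (‖z‖ ^ 2), sq_nonneg (‖z‖ - 1)]
  calc ‖radialPrimitive h z‖ = ‖z‖ * ‖∫ t in (0 : ℝ)..1, h (t * z)‖ := norm_smul _ _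
    _ ≤ Real.exp (‖z‖ ^ 2) * (A * Real.exp (B * ‖z‖ ^ 2)) := by gcongr
    _ = A * Real.exp ((B + 1) * ‖z‖ ^ 2) := by rw [add_one_mul, Real.exp_add]; ring

theorem norm_le_on_sector_of_norm_le_on_rays {f : ℂ → E} (hf : Differentiable ℂ f)
    {A B C ρ θ₁ θ₂ : ℝ} (hB : 0 ≤ B) (hρ : 0 ≤ ρ) (hθ : θ₁ < θ₂)
    (hρθ : ρ * (θ₂ - θ₁) < Real.pi)
    (hgrowth : ∀ z, ‖f z‖ ≤ A * Real.exp (B * ‖z‖ ^ ρ))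
    (hray₁ : ∀ r : ℝ, 0 ≤ r → ‖f (r * exp (θ₁ * I))‖ ≤ C)
    (hray₂ : ∀ r : ℝ, 0 ≤ r → ‖f (r * exp (θ₂ * I))‖ ≤ C)
    {z : ℂ} (hz : z.arg ∈ Set.Icc θ₁ θ₂) : ‖f z‖ ≤ C := by
  have exp_eq (w : ℂ) : exp w = (Real.exp w.re : ℝ) * exp (w.im * I) := by
    rw [ofReal_exp, ← exp_add, re_add_im]
  rcases eq_or_ne z 0 with rfl | hz0
  · simpa using hray₁ 0 le_rfl
  have hA : 0 ≤ A := nonneg_of_mul_nonneg_left ((norm_nonneg _).trans (hgrowth 0))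
    (Real.exp_pos _)
  have hstrip : ‖f (exp (log z))‖ ≤ C := by
    refine PhragmenLindelof.horizontal_strip (f := f ∘ exp)
      (hf.comp differentiable_exp).diffContOnCl ⟨ρ, ?_, B, ?_⟩ ?_ ?_
      (by simpa only [log_im] using hz.1) (by simpa only [log_im] using hz.2)
    · rwa [lt_div_iff₀ (sub_pos.2 hθ)]
    · refine .of_bound A (.of_forall fun w ↦ (hgrowth _).trans ?_)
      rw [Real.norm_eq_abs, Real.abs_exp, norm_exp, ← Real.exp_mul, mul_comm w.re]
      gcongr
      exact le_abs_self w.re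
    · rintro w rfl
      rw [Function.comp_apply, exp_eq]
      exact hray₁ _ (Real.exp_pos _).le
    · rintro w rfl
      rw [Function.comp_apply, exp_eq]
      exact hray₂ _ (Real.exp_pos _).le
  rwa [exp_log hz0] at hstrip

end RadialPrimitive

section EntireFunctions

open Complex Filter Topology

/-- Entire functions controlled by `M`: along the imaginary direction they grow at most like `M`,
while on the real line they decay so fast that their integral against `M` is at most `C`. -/
structure BeurlingClass (M : ℝ → ℝ) (C : ℝ) (g : ℂ → ℂ) : Prop where
  differentiable : Differentiable ℂ g
  norm_le : ∀ z, ‖g z‖ ≤ M |z.im|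
  integrable : Integrable fun x : ℝ ↦ ‖g x‖ * M |x|
  integral_le : ∫ x : ℝ, ‖g x‖ * M |x| ≤ C

/-- The product `a(e^{-iθ}u) b(iu)`. The case `θ = 0` is the function whose primitive is to be
bounded; a tilt `θ > 0` leaves a sector of opening less than `π / 2`, where Phragmén–Lindelöf
applies to functions of order two. -/
noncomputable def tiltedProduct (a b : ℂ → ℂ) (θ : ℝ) (u : ℂ) : ℂ :=
  a (exp (-(θ * I)) * u) * b (I * u)

variable {M : ℝ → ℝ} {A B C : ℝ} {a b g : ℂ → ℂ}

theorem norm_exp_neg_ofReal_mul_I (θ : ℝ) : ‖exp (-(θ * I))‖ = 1 := by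
  rw [← neg_mul, ← ofReal_neg, norm_exp_ofReal_mul_I]

namespace BeurlingClass

theorem nonneg_of_nonneg (hg : BeurlingClass M C g) {t : ℝ} (ht : 0 ≤ t) : 0 ≤ M t := by
  have := (norm_nonneg _).trans (hg.norm_le (t * I))
  simpa only [mul_I_im, ofReal_re, abs_of_nonneg ht] using this

theorem weighted_nonneg (hg : BeurlingClass M C g) : 0 ≤ fun x : ℝ ↦ ‖g x‖ * M |x| :=
  fun x ↦ mul_nonneg (norm_nonneg _) (hg.nonneg_of_nonneg (abs_nonneg x))

theorem comp_neg (hg : BeurlingClass M C g) : BeurlingClass M C fun z ↦ g (-z) where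
  differentiable := hg.differentiable.comp differentiable_neg
  norm_le z := by simpa only [neg_im, abs_neg] using hg.norm_le (-z)
  integrable := by simpa only [ofReal_neg, abs_neg] using hg.integrable.comp_neg
  integral_le := by
    rw [← integral_neg_eq_self]
    simpa only [ofReal_neg, abs_neg, neg_neg] using hg.integral_le

theorem norm_le_of_norm_eq (hg : BeurlingClass M C g) (hM : Monotone M) {z : ℂ} {t : ℝ}
    (hz : ‖z‖ = |t|) : ‖g z‖ ≤ M |t| :=
  (hg.norm_le z).trans (hM (hz ▸ abs_im_le_norm z))

theorem norm_le_exp (hg : BeurlingClass M C g) (hB : 0 ≤ B)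
    (hMgrowth : ∀ t, 0 ≤ t → M t ≤ A * Real.exp (B * t ^ 2)) (z : ℂ) :
    ‖g z‖ ≤ A * Real.exp (B * ‖z‖ ^ 2) := by
  have hA : 0 ≤ A := by simpa using (hg.nonneg_of_nonneg le_rfl).trans (hMgrowth 0 le_rfl)
  refine ((hg.norm_le z).trans (hMgrowth _ (abs_nonneg _))).trans ?_
  gcongr
  exact abs_im_le_norm z

end BeurlingClass

theorem differentiable_tiltedProduct (ha : Differentiable ℂ a) (hb : Differentiable ℂ b) (θ : ℝ) :
    Differentiable ℂ (tiltedProduct a b θ) := by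
  unfold tiltedProduct
  fun_prop

theorem norm_tiltedProduct_le_exp (ha : BeurlingClass M C a) (hb : BeurlingClass M C b)
    (hB : 0 ≤ B) (hMgrowth : ∀ t, 0 ≤ t → M t ≤ A * Real.exp (B * t ^ 2)) (θ : ℝ) (z : ℂ) :
    ‖tiltedProduct a b θ z‖ ≤ A ^ 2 * Real.exp (2 * B * ‖z‖ ^ 2) := by
  have ha' := ha.norm_le_exp hB hMgrowth (exp (-(θ * I)) * z)
  have hb' := hb.norm_le_exp hB hMgrowth (I * z)
  rw [norm_mul, norm_exp_neg_ofReal_mul_I, one_mul] at ha'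
  rw [norm_mul, norm_I, one_mul] at hb'
  have hbound_nonneg : 0 ≤ A * Real.exp (B * ‖z‖ ^ 2) := (norm_nonneg _).trans ha'
  calc ‖tiltedProduct a b θ z‖ = ‖a (exp (-(θ * I)) * z)‖ * ‖b (I * z)‖ := norm_mul _ _
    _ ≤ (A * Real.exp (B * ‖z‖ ^ 2)) * (A * Real.exp (B * ‖z‖ ^ 2)) := by gcongr
    _ = A ^ 2 * Real.exp (2 * B * ‖z‖ ^ 2) := by
      rw [mul_assoc 2, two_mul (B * _), Real.exp_add]; ring

theorem norm_tiltedProduct_on_tilted_axis_le (hb : BeurlingClass M C b) (hM : Monotone M)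
    (a : ℂ → ℂ) (θ t : ℝ) :
    ‖tiltedProduct a b θ (t * exp (θ * I))‖ ≤ ‖a t‖ * M |t| := by
  have hrotate : exp (-(θ * I)) * (t * exp (θ * I)) = t := by
    rw [mul_left_comm, ← exp_add, neg_add_cancel, exp_zero, mul_one]
  rw [tiltedProduct, hrotate, norm_mul]
  gcongr
  refine hb.norm_le_of_norm_eq hM ?_
  rw [norm_mul, norm_I, norm_mul, norm_exp_ofReal_mul_I, one_mul, mul_one, norm_real,
    Real.norm_eq_abs]

theorem norm_tiltedProduct_on_imaginary_axis_le (ha : BeurlingClass M C a) (hM : Monotone M)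
    (b : ℂ → ℂ) (θ t : ℝ) :
    ‖tiltedProduct a b θ (t * I)‖ ≤ ‖b (-t)‖ * M |t| := by
  have hrotate : I * (t * I) = -t := by rw [mul_left_comm, I_mul_I, mul_neg_one]
  rw [tiltedProduct, hrotate, norm_mul, mul_comm]
  gcongr
  refine ha.norm_le_of_norm_eq hM ?_
  rw [norm_mul, norm_exp_neg_ofReal_mul_I, norm_mul, norm_I, one_mul, mul_one, norm_real,
    Real.norm_eq_abs]

theorem norm_primitive_le_on_tilted_axis (ha : BeurlingClass M C a) (hb : BeurlingClass M C b)
    (hM : Monotone M) (θ : ℝ) {r : ℝ} (hr : 0 ≤ r) :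
    ‖radialPrimitive (tiltedProduct a b θ) (r * exp (θ * I))‖ ≤ C :=
  (norm_radialPrimitive_le_integral (norm_exp_ofReal_mul_I θ) ha.integrable ha.weighted_nonneg
    (fun t _ ↦ norm_tiltedProduct_on_tilted_axis_le hb hM a θ t) hr).trans ha.integral_le

theorem norm_primitive_le_on_imaginary_axis (ha : BeurlingClass M C a)
    (hb : BeurlingClass M C b) (hM : Monotone M) (θ : ℝ) {r : ℝ} (hr : 0 ≤ r) :
    ‖radialPrimitive (tiltedProduct a b θ) (r * I)‖ ≤ C :=
  (norm_radialPrimitive_le_integral norm_I hb.comp_neg.integrable hb.comp_neg.weighted_nonneg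
    (fun t _ ↦ norm_tiltedProduct_on_imaginary_axis_le ha hM b θ t) hr).trans
    hb.comp_neg.integral_le

theorem norm_primitive_le_on_tilted_sector (ha : BeurlingClass M C a) (hb : BeurlingClass M C b)
    (hM : Monotone M) (hB : 0 ≤ B) (hMgrowth : ∀ t, 0 ≤ t → M t ≤ A * Real.exp (B * t ^ 2))
    {θ : ℝ} (hθ : θ ∈ Set.Ioo 0 (Real.pi / 2)) {z : ℂ} (hz : z.arg ∈ Set.Icc θ (Real.pi / 2)) :
    ‖radialPrimitive (tiltedProduct a b θ) z‖ ≤ C := by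
  have hdiff : Differentiable ℂ (radialPrimitive (tiltedProduct a b θ)) := fun w ↦
    (hasDerivAt_radialPrimitive
      (differentiable_tiltedProduct ha.differentiable hb.differentiable θ) w).differentiableAt
  refine norm_le_on_sector_of_norm_le_on_rays (A := A ^ 2) (B := 2 * B + 1) (ρ := 2) hdiff
    (by positivity) zero_le_two hθ.2 (by linarith [hθ.1]) (fun w ↦ ?_)
    (fun r ↦ norm_primitive_le_on_tilted_axis ha hb hM θ) (fun r hr ↦ ?_) hz
  · rw [Real.rpow_two]
    exact norm_radialPrimitive_le_exp (by positivity)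
      (norm_tiltedProduct_le_exp ha hb hB hMgrowth θ) w
  · rw [ofReal_div, ofReal_ofNat, exp_pi_div_two_mul_I]
    exact norm_primitive_le_on_imaginary_axis ha hb hM θ hr

theorem continuous_radialPrimitive_tiltedProduct (ha : Continuous a) (hb : Continuous b) (z : ℂ) :
    Continuous fun θ : ℝ ↦ radialPrimitive (tiltedProduct a b θ) z := by
  have hjoint : Continuous (Function.uncurry fun θ t : ℝ ↦ tiltedProduct a b θ (t * z)) := by
    unfold tiltedProduct Function.uncurry
    fun_prop
  have hintegral : Continuous fun θ : ℝ ↦ ∫ t in (0 : ℝ)..1, tiltedProduct a b θ (t * z) :=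
    intervalIntegral.continuous_parametric_intervalIntegral_of_continuous' hjoint 0 1
  exact hintegral.const_smul z

theorem norm_primitive_le_on_first_quadrant (ha : BeurlingClass M C a)
    (hb : BeurlingClass M C b) (hM : Monotone M) (hB : 0 ≤ B)
    (hMgrowth : ∀ t, 0 ≤ t → M t ≤ A * Real.exp (B * t ^ 2)) {z : ℂ} (hre : 0 ≤ z.re)
    (him : 0 ≤ z.im) : ‖radialPrimitive (tiltedProduct a b 0) z‖ ≤ C := by
  have harg_le : z.arg ≤ Real.pi / 2 := arg_le_pi_div_two_iff.2 (.inl hre)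
  rcases (arg_nonneg_iff.2 him).eq_or_lt with harg | harg
  · rw [← norm_mul_exp_arg_mul_I z, ← harg]
    exact norm_primitive_le_on_tilted_axis ha hb hM 0 (norm_nonneg z)
  · have htendsto : Tendsto (fun θ : ℝ ↦ ‖radialPrimitive (tiltedProduct a b θ) z‖) (𝓝[>] 0)
        (𝓝 ‖radialPrimitive (tiltedProduct a b 0) z‖) :=
      ((continuous_radialPrimitive_tiltedProduct ha.differentiable.continuous
        hb.differentiable.continuous z).norm.tendsto 0).mono_left nhdsWithin_le_nhds
    refine le_of_tendsto htendsto ?_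
    filter_upwards [Ioo_mem_nhdsGT harg] with θ hθ
    exact norm_primitive_le_on_tilted_sector ha hb hM hB hMgrowth
      ⟨hθ.1, hθ.2.trans_le harg_le⟩ ⟨hθ.2.le, harg_le⟩

theorem norm_radialPrimitive_tiltedProduct_I_mul (a b : ℂ → ℂ) (z : ℂ) :
    ‖radialPrimitive (tiltedProduct a b 0) (I * z)‖ =
      ‖radialPrimitive (tiltedProduct (fun u ↦ b (-u)) a 0) z‖ := by
  have hrotate (u : ℂ) : I * (I * u) = -u := by rw [← mul_assoc, I_mul_I, neg_one_mul]
  rw [radialPrimitive_mul, norm_smul, norm_I, one_mul]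
  unfold tiltedProduct
  simp only [ofReal_zero, zero_mul, neg_zero, exp_zero, one_mul, hrotate, mul_comm (a _)]

theorem norm_primitive_le (ha : BeurlingClass M C a) (hb : BeurlingClass M C b)
    (hM : Monotone M) (hB : 0 ≤ B) (hMgrowth : ∀ t, 0 ≤ t → M t ≤ A * Real.exp (B * t ^ 2))
    (z : ℂ) : ‖radialPrimitive (tiltedProduct a b 0) z‖ ≤ C := by
  have eq_I_mul (w : ℂ) : w = I * (-I * w) := by
    rw [← mul_assoc, mul_neg, I_mul_I, neg_neg, one_mul]
  have upper_half_plane {a b : ℂ → ℂ} (ha : BeurlingClass M C a) (hb : BeurlingClass M C b)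
      {w : ℂ} (hw : 0 ≤ w.im) : ‖radialPrimitive (tiltedProduct a b 0) w‖ ≤ C := by
    rcases le_total 0 w.re with hre | hre
    · exact norm_primitive_le_on_first_quadrant ha hb hM hB hMgrowth hre hw
    · rw [eq_I_mul w, norm_radialPrimitive_tiltedProduct_I_mul]
      exact norm_primitive_le_on_first_quadrant hb.comp_neg ha hM hB hMgrowth
        (by simpa using hw) (by simpa using hre)
  rcases le_total 0 z.im with him | him
  · exact upper_half_plane ha hb him
  · rw [eq_I_mul z, norm_radialPrimitive_tiltedProduct_I_mul, eq_I_mul (-I * z),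
      norm_radialPrimitive_tiltedProduct_I_mul]
    exact upper_half_plane ha.comp_neg hb.comp_neg (by simpa using him)

theorem BeurlingClass.eq_zero (hg : BeurlingClass M C g) (hM : Monotone M) (hB : 0 ≤ B)
    (hMgrowth : ∀ t, 0 ≤ t → M t ≤ A * Real.exp (B * t ^ 2)) : g = 0 := by
  have hderiv := hasDerivAt_radialPrimitive
    (differentiable_tiltedProduct hg.differentiable hg.differentiable 0)
  have hbounded : Bornology.IsBounded (Set.range (radialPrimitive (tiltedProduct g g 0))) :=
    isBounded_iff_forall_norm_le.2
      ⟨C, Set.forall_mem_range.2 (norm_primitive_le hg hg hM hB hMgrowth)⟩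
  have hconst : radialPrimitive (tiltedProduct g g 0) = fun _ ↦ _ := funext fun z ↦
    Differentiable.apply_eq_apply_of_bounded (fun w ↦ (hderiv w).differentiableAt) hbounded z 0
  have hproduct (z : ℂ) : g z * g (I * z) = 0 := by
    have hz := hderiv z
    rw [hconst] at hz
    simpa [tiltedProduct] using hz.unique (hasDerivAt_const z _)
  have hrotate : Differentiable ℂ fun z ↦ g (I * z) := hg.differentiable.comp (by fun_prop)
  rcases AnalyticOnNhd.eq_zero_or_eq_zero_of_mul_eq_zero (U := Set.univ)
    (fun z _ ↦ hg.differentiable.analyticAt z) (fun z _ ↦ hrotate.analyticAt z)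
    (fun z _ ↦ hproduct z) isPreconnected_univ with h | h
  · exact funext fun z ↦ h z trivial
  · refine funext fun z ↦ ?_
    simpa [← mul_assoc] using h (-I * z) trivial

end EntireFunctions

section FourierLaplace

open Complex FourierTransform

variable {E : Type*} [NormedAddCommGroup E]

/-- The exponential moment `∫ e^{t|x|} ‖f(x)‖ dx`, which dominates the Fourier transform of `f` on
the horizontal lines at height `± t`. -/
noncomputable def expMoment (f : ℝ → E) (t : ℝ) : ℝ :=
  ∫ x, Real.exp (t * |x|) * ‖f x‖

theorem expMoment_nonneg (f : ℝ → E) (t : ℝ) : 0 ≤ expMoment f t :=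
  integral_nonneg fun x ↦ mul_nonneg (Real.exp_pos _).le (norm_nonneg (f x))

variable [NormedSpace ℂ E] {f : ℝ → E}

/-- The Fourier transform `∫ e^{-izt} f(t) dt`, at all complex frequencies `z`. -/
noncomputable def fourierLaplace (f : ℝ → E) (z : ℂ) : E :=
  ∫ t : ℝ, exp (-(I * z * t)) • f t

theorem fourierLaplace_ofReal (f : ℝ → E) (y : ℝ) :
    fourierLaplace f y = 𝓕 f (y / (2 * Real.pi)) := by
  have hpi : (Real.pi : ℂ) ≠ 0 := ofReal_ne_zero.2 Real.pi_ne_zero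
  rw [Real.fourier_real_eq_integral_exp_smul, fourierLaplace]
  congr! 4 with t
  push_cast
  field_simp

theorem continuous_fourierLaplace_ofReal (hf : Integrable f) :
    Continuous fun y : ℝ ↦ fourierLaplace f y := by
  have hcont : Continuous (𝓕 f) :=
    VectorFourier.fourierIntegral_continuous Real.continuous_fourierChar continuous_inner hf
  simp only [fourierLaplace_ofReal]
  fun_prop

theorem norm_exp_neg_I_mul_le (z : ℂ) (x : ℝ) :
    ‖exp (-(I * z * x))‖ ≤ Real.exp (|z.im| * |x|) := by
  rw [norm_exp, ← abs_mul]
  gcongr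
  simpa using le_abs_self (z.im * x)

theorem norm_exp_neg_I_mul_mul_le {z w : ℂ} (hw : ‖w - z‖ < 1) (x : ℝ) :
    ‖exp (-(I * w * x)) * -(I * x)‖ ≤ Real.exp ((‖z‖ + 2) * |x|) := by
  have him : |w.im| ≤ ‖z‖ + 1 := by
    linarith [abs_im_le_norm w, norm_le_norm_add_norm_sub' w z]
  rw [norm_mul, norm_neg, norm_mul, norm_I, one_mul, norm_real, Real.norm_eq_abs]
  calc ‖exp (-(I * w * x))‖ * |x| ≤ Real.exp ((‖z‖ + 1) * |x|) * Real.exp |x| := by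
        gcongr
        · exact (norm_exp_neg_I_mul_le w x).trans (by gcongr)
        · linarith [Real.add_one_le_exp |x|]
    _ = Real.exp ((‖z‖ + 2) * |x|) := by rw [← Real.exp_add]; ring_nf

theorem integrable_exp_mul_abs_mul_norm {c : ℝ}
    (hf : Integrable fun x ↦ Real.exp (c * |x|) • f x) :
    Integrable fun x ↦ Real.exp (c * |x|) * ‖f x‖ := by
  simpa only [norm_smul, Real.norm_eq_abs, Real.abs_exp] using hf.norm

theorem expMoment_mono (hf : ∀ c : ℝ, Integrable fun x ↦ Real.exp (c * |x|) • f x) :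
    Monotone (expMoment f) := fun s t hst ↦
  integral_mono (integrable_exp_mul_abs_mul_norm (hf s)) (integrable_exp_mul_abs_mul_norm (hf t))
    fun x ↦ by dsimp only; gcongr

theorem norm_fourierLaplace_le_expMoment
    (hf : ∀ c : ℝ, Integrable fun x ↦ Real.exp (c * |x|) • f x) (z : ℂ) :
    ‖fourierLaplace f z‖ ≤ expMoment f |z.im| := by
  refine norm_integral_le_of_norm_le (integrable_exp_mul_abs_mul_norm (hf _))
    (ae_of_all _ fun x ↦ ?_)
  rw [norm_smul]
  gcongr
  exact norm_exp_neg_I_mul_le z x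

theorem differentiable_fourierLaplace
    (hf : ∀ c : ℝ, Integrable fun x ↦ Real.exp (c * |x|) • f x) :
    Differentiable ℂ (fourierLaplace f) := by
  intro z
  have hmeas {k : ℝ → ℂ} (hk : Continuous k) : AEStronglyMeasurable fun x ↦ k x • f x :=
    hk.aestronglyMeasurable.smul (by simpa using (hf 0).aestronglyMeasurable)
  have hker_deriv (w : ℂ) (x : ℝ) : HasDerivAt (fun w ↦ exp (-(I * w * x)))
      (exp (-(I * w * x)) * -(I * x)) w := by
    simpa using (((hasDerivAt_id w).const_mul I).mul_const (x : ℂ)).neg.cexp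
  have hint : Integrable fun x : ℝ ↦ exp (-(I * z * x)) • f x := by
    refine (integrable_exp_mul_abs_mul_norm (hf |z.im|)).mono' (hmeas (by fun_prop))
      (ae_of_all _ fun x ↦ ?_)
    rw [norm_smul]
    gcongr
    exact norm_exp_neg_I_mul_le z x
  refine (hasDerivAt_integral_of_dominated_loc_of_deriv_le (μ := volume) (𝕜 := ℂ)
    (F := fun w (x : ℝ) ↦ exp (-(I * w * x)) • f x)
    (F' := fun w (x : ℝ) ↦ (exp (-(I * w * x)) * -(I * x)) • f x)
    (Metric.ball_mem_nhds z one_pos) (.of_forall fun w ↦ hmeas (by fun_prop)) hint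
    (hmeas (by fun_prop)) (ae_of_all _ fun x w hw ↦ ?_)
    (integrable_exp_mul_abs_mul_norm (hf (‖z‖ + 2)))
    (ae_of_all _ fun x w _ ↦ (hker_deriv w x).smul_const (f x))).2.differentiableAt
  rw [norm_smul]
  gcongr
  exact norm_exp_neg_I_mul_mul_le (mem_ball_iff_norm.1 hw) x

end FourierLaplace

section FourierUniqueness

open FourierTransform Real

variable {V E : Type*} [NormedAddCommGroup V] [InnerProductSpace ℝ V] [FiniteDimensional ℝ V]
  [MeasurableSpace V] [BorelSpace V] [NormedAddCommGroup E] [NormedSpace ℂ E] [CompleteSpace E]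

theorem ae_eq_zero_of_fourier_eq_zero {f : V → E} (hf : Integrable f) (hfourier : 𝓕 f = 0) :
    f =ᵐ[volume] 0 := by
  refine ae_eq_zero_of_integral_contDiff_smul_eq_zero hf.locallyIntegrable
    fun g hg_smooth hg_supp ↦ ?_
  have hsupp : HasCompactSupport (Complex.ofRealCLM ∘ g) := hg_supp.comp_left rfl
  let φ := hsupp.toSchwartzMap (Complex.ofRealCLM.contDiff.comp hg_smooth)
  let ψ : SchwartzMap V ℂ := 𝓕⁻ φ
  have hψ : 𝓕 ⇑ψ = φ := by
    rw [← SchwartzMap.fourier_coe, FourierTransform.fourier_fourierInv_eq]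
  have hflip : ∫ x, 𝓕 ⇑ψ x • f x = ∫ x, ψ x • 𝓕 f x := by
    have := VectorFourier.integral_fourierIntegral_smul_eq_flip (μ := volume) (ν := volume)
      (L := innerₗ V) continuous_fourierChar continuous_inner ψ.integrable hf
    rwa [flip_innerₗ] at this
  calc ∫ x, g x • f x = ∫ x, 𝓕 ⇑ψ x • f x := by rw [hψ]; rfl
    _ = ∫ x, ψ x • 𝓕 f x := hflip
    _ = 0 := by simp [hfourier]

end FourierUniqueness

section GaussianSmoothing

open Complex ProbabilityTheory
open scoped ENNReal NNReal

variable {E : Type*} [NormedAddCommGroup E] [NormedSpace ℂ E] {f : ℝ → E}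

/-- The product of `f` with the characteristic function of the standard Gaussian measure, so that
on the Fourier side it is the convolution with that measure. -/
noncomputable def gaussianMul (f : ℝ → E) (x : ℝ) : E :=
  Real.exp (-x ^ 2 / 2) • f x

theorem exp_mul_norm_gaussianMul_le (f : ℝ → E) (t x : ℝ) :
    Real.exp (t * |x|) * ‖gaussianMul f x‖ ≤ Real.exp (t ^ 2 / 2) * ‖f x‖ := by
  rw [gaussianMul, norm_smul, Real.norm_eq_abs, Real.abs_exp, ← mul_assoc, ← Real.exp_add]
  gcongr
  nlinarith [sq_nonneg (t - |x|), sq_abs x]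

theorem integrable_exp_smul_gaussianMul (hf : Integrable f) (t : ℝ) :
    Integrable fun x ↦ Real.exp (t * |x|) • gaussianMul f x := by
  have hexp : Continuous fun x : ℝ ↦ Real.exp (t * |x|) := by fun_prop
  have hgauss : Continuous fun x : ℝ ↦ Real.exp (-x ^ 2 / 2) := by fun_prop
  refine (hf.norm.const_mul (Real.exp (t ^ 2 / 2))).mono'
    (hexp.aestronglyMeasurable.smul (hgauss.aestronglyMeasurable.smul hf.aestronglyMeasurable))
    (ae_of_all _ fun x ↦ ?_)
  rw [norm_smul, Real.norm_eq_abs, Real.abs_exp]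
  exact exp_mul_norm_gaussianMul_le f t x

theorem expMoment_gaussianMul_le (hf : Integrable f) (t : ℝ) :
    expMoment (gaussianMul f) t ≤ (∫ x, ‖f x‖) * Real.exp (1 / 2 * t ^ 2) := by
  calc expMoment (gaussianMul f) t ≤ ∫ x, Real.exp (t ^ 2 / 2) * ‖f x‖ :=
        integral_mono (integrable_exp_mul_abs_mul_norm (integrable_exp_smul_gaussianMul hf t))
          (hf.norm.const_mul _) (exp_mul_norm_gaussianMul_le f t)
    _ = (∫ x, ‖f x‖) * Real.exp (1 / 2 * t ^ 2) := by
      rw [integral_const_mul, mul_comm, div_eq_inv_mul, one_div]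

theorem fourierLaplace_gaussianMul [CompleteSpace E] (hf : Integrable f) (y : ℝ) :
    fourierLaplace (gaussianMul f) y =
      ∫ v, fourierLaplace f (y - v : ℝ) ∂gaussianReal 0 1 := by
  have hkernel (t : ℝ) : ∫ v : ℝ, exp (-(I * (y - v : ℝ) * t)) ∂gaussianReal 0 1 =
      exp (-(I * y * t)) * Real.exp (-t ^ 2 / 2) := by
    calc ∫ v : ℝ, exp (-(I * (y - v : ℝ) * t)) ∂gaussianReal 0 1
        = ∫ v : ℝ, exp (-(I * y * t)) * exp (t * v * I) ∂gaussianReal 0 1 := by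
          congr with v
          rw [← exp_add]
          push_cast
          ring_nf
      _ = exp (-(I * y * t)) * Real.exp (-t ^ 2 / 2) := by
          rw [integral_const_mul, ← charFun_apply_real, charFun_gaussianReal]
          push_cast
          ring_nf
  have hint : Integrable (Function.uncurry fun (v t : ℝ) ↦ exp (-(I * (y - v : ℝ) * t)) • f t)
      ((gaussianReal 0 1).prod volume) := by
    have hcont : Continuous fun w : ℝ × ℝ ↦ exp (-(I * (y - w.1 : ℝ) * w.2)) := by fun_prop
    refine (hf.comp_snd (gaussianReal 0 1)).bdd_smul 1 hcont.aestronglyMeasurable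
      (ae_of_all _ fun w ↦ ?_)
    simpa using norm_exp_neg_I_mul_le (y - w.1 : ℝ) w.2
  simp only [fourierLaplace]
  rw [integral_integral_swap hint]
  congr with t
  rw [integral_smul_const, hkernel, gaussianMul, mul_smul, coe_smul]

theorem lintegral_exp_mul_abs_gaussianReal_le (σ : ℝ≥0) (t : ℝ) :
    ∫⁻ v, .ofReal (Real.exp (t * |v|)) ∂gaussianReal 0 σ ≤
      2 * .ofReal (Real.exp (σ * t ^ 2 / 2)) := by
  have hmgf (s : ℝ) : ∫⁻ v, .ofReal (Real.exp (s * v)) ∂gaussianReal 0 σ =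
      .ofReal (Real.exp (σ * s ^ 2 / 2)) := by
    rw [← ofReal_integral_eq_lintegral_ofReal (integrable_exp_mul_gaussianReal s)
      (ae_of_all _ fun v ↦ (Real.exp_pos _).le)]
    have := congr_fun (mgf_fun_id_gaussianReal (μ := 0) (v := σ)) s
    rw [mgf, zero_mul, zero_add] at this
    rw [this]
  have hsplit (v : ℝ) : ENNReal.ofReal (Real.exp (t * |v|)) ≤
      .ofReal (Real.exp (t * v)) + .ofReal (Real.exp (-t * v)) := by
    rcases abs_choice v with hv | hv <;> rw [hv]
    · exact le_self_add
    · rw [mul_neg, neg_mul]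
      exact le_add_self
  calc ∫⁻ v, .ofReal (Real.exp (t * |v|)) ∂gaussianReal 0 σ
      ≤ ∫⁻ v, (.ofReal (Real.exp (t * v)) + .ofReal (Real.exp (-t * v))) ∂gaussianReal 0 σ :=
        lintegral_mono hsplit
    _ = 2 * .ofReal (Real.exp (σ * t ^ 2 / 2)) := by
      rw [lintegral_add_left (by fun_prop), hmgf, hmgf, neg_sq, two_mul]

theorem lintegral_exp_mul_lintegral_sub_le (ν : Measure ℝ) [SFinite ν] {Φ : ℝ → ℝ≥0∞}
    (hΦ : Measurable Φ) {t : ℝ} (ht : 0 ≤ t) :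
    ∫⁻ y, .ofReal (Real.exp (t * |y|)) * ∫⁻ v, Φ (y - v) ∂ν ≤
      (∫⁻ v, .ofReal (Real.exp (t * |v|)) ∂ν) * ∫⁻ u, .ofReal (Real.exp (t * |u|)) * Φ u := by
  have hsubadd (u v : ℝ) : ENNReal.ofReal (Real.exp (t * |u + v|)) ≤
      .ofReal (Real.exp (t * |v|)) * .ofReal (Real.exp (t * |u|)) := by
    rw [← ENNReal.ofReal_mul (Real.exp_pos _).le, ← Real.exp_add, ← mul_add, add_comm |v|]
    gcongr
    exact abs_add_le u v
  have hjoint : Measurable (Function.uncurry fun y v : ℝ ↦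
      ENNReal.ofReal (Real.exp (t * |y|)) * Φ (y - v)) := by
    unfold Function.uncurry
    fun_prop
  calc ∫⁻ y, .ofReal (Real.exp (t * |y|)) * ∫⁻ v, Φ (y - v) ∂ν
      = ∫⁻ y, ∫⁻ v, .ofReal (Real.exp (t * |y|)) * Φ (y - v) ∂ν := by
        congr with y
        rw [lintegral_const_mul' _ _ ENNReal.ofReal_ne_top]
    _ = ∫⁻ v, (∫⁻ y, .ofReal (Real.exp (t * |y|)) * Φ (y - v)) ∂ν :=
        lintegral_lintegral_swap hjoint.aemeasurable
    _ = ∫⁻ v, (∫⁻ u, .ofReal (Real.exp (t * |u + v|)) * Φ u) ∂ν := by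
        congr with v
        simpa using lintegral_sub_right_eq_self
          (fun u ↦ .ofReal (Real.exp (t * |u + v|)) * Φ u) v
    _ ≤ ∫⁻ v, (∫⁻ u, .ofReal (Real.exp (t * |v|)) * (.ofReal (Real.exp (t * |u|)) * Φ u)) ∂ν := by
        refine lintegral_mono fun v ↦ lintegral_mono fun u ↦ ?_
        rw [← mul_assoc]
        gcongr
        exact hsubadd u v
    _ = (∫⁻ v, .ofReal (Real.exp (t * |v|)) ∂ν) * ∫⁻ u, .ofReal (Real.exp (t * |u|)) * Φ u := by
        simp_rw [lintegral_const_mul' _ _ ENNReal.ofReal_ne_top]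
        rw [lintegral_mul_const _ (by fun_prop)]

end GaussianSmoothing

section Beurling

open ProbabilityTheory
open scoped ENNReal FourierTransform

variable {E : Type*} [NormedAddCommGroup E] [NormedSpace ℂ E] {f : ℝ → E}

/-- Beurling's integral `∬ |f(x)| |f̂(y)| e^{|xy|} dx dy`. -/
noncomputable def beurlingIntegral (f : ℝ → E) : ℝ≥0∞ :=
  ∫⁻ x, ∫⁻ y : ℝ, ‖f x‖ₑ * (.ofReal (Real.exp (|x| * |y|)) * ‖fourierLaplace f y‖ₑ)

theorem beurlingIntegral_gaussianMul_le [CompleteSpace E] (hf : Integrable f) :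
    beurlingIntegral (gaussianMul f) ≤ 2 * beurlingIntegral f := by
  have hmeas : Measurable fun y : ℝ ↦ ‖fourierLaplace f y‖ₑ :=
    (continuous_fourierLaplace_ofReal hf).enorm.measurable
  have hcancel (x : ℝ) : ‖gaussianMul f x‖ₑ * .ofReal (Real.exp (x ^ 2 / 2)) = ‖f x‖ₑ := by
    rw [gaussianMul, enorm_smul, Real.enorm_of_nonneg (Real.exp_pos _).le, mul_right_comm,
      ← ENNReal.ofReal_mul (Real.exp_pos _).le, ← Real.exp_add, neg_div, neg_add_cancel,
      Real.exp_zero, ENNReal.ofReal_one, one_mul]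
  have hinner (x : ℝ) :
      ∫⁻ y : ℝ, .ofReal (Real.exp (|x| * |y|)) * ‖fourierLaplace (gaussianMul f) y‖ₑ ≤
        2 * .ofReal (Real.exp (x ^ 2 / 2)) *
          ∫⁻ y : ℝ, .ofReal (Real.exp (|x| * |y|)) * ‖fourierLaplace f y‖ₑ := by
    calc ∫⁻ y : ℝ, .ofReal (Real.exp (|x| * |y|)) * ‖fourierLaplace (gaussianMul f) y‖ₑ
        ≤ ∫⁻ y : ℝ, .ofReal (Real.exp (|x| * |y|)) *
            ∫⁻ v, ‖fourierLaplace f (y - v : ℝ)‖ₑ ∂gaussianReal 0 1 := by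
          gcongr with y
          rw [fourierLaplace_gaussianMul hf]
          exact enorm_integral_le_lintegral_enorm _
      _ ≤ _ := lintegral_exp_mul_lintegral_sub_le _ hmeas (abs_nonneg x)
      _ ≤ _ := by
          gcongr
          simpa using lintegral_exp_mul_abs_gaussianReal_le 1 |x|
  simp only [beurlingIntegral]
  rw [← lintegral_const_mul' _ _ ENNReal.ofNat_ne_top]
  gcongr with x
  rw [lintegral_const_mul' _ _ enorm_ne_top, lintegral_const_mul' _ _ enorm_ne_top]
  refine (mul_le_mul_right (hinner x) _).trans_eq ?_
  rw [← hcancel]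
  ring

theorem lintegral_enorm_fourierLaplace_mul_expMoment
    (hf : ∀ c : ℝ, Integrable fun x ↦ Real.exp (c * |x|) • f x) :
    ∫⁻ y : ℝ, ‖‖fourierLaplace f y‖ * expMoment f |y|‖ₑ = beurlingIntegral f := by
  have hf_int : Integrable f := by simpa using hf 0
  have hmeas := (continuous_fourierLaplace_ofReal hf_int).enorm.measurable
  have hmoment (t : ℝ) :
      ‖expMoment f t‖ₑ = ∫⁻ x, .ofReal (Real.exp (t * |x|)) * ‖f x‖ₑ := by
    rw [Real.enorm_of_nonneg (expMoment_nonneg f t), expMoment,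
      ofReal_integral_eq_lintegral_ofReal (integrable_exp_mul_abs_mul_norm (hf t))
        (ae_of_all _ fun x ↦ by positivity)]
    simp only [ENNReal.ofReal_mul (Real.exp_pos _).le, ofReal_norm]
  calc ∫⁻ y : ℝ, ‖‖fourierLaplace f y‖ * expMoment f |y|‖ₑ
      = ∫⁻ y : ℝ, ∫⁻ x, ‖f x‖ₑ * (.ofReal (Real.exp (|x| * |y|)) * ‖fourierLaplace f y‖ₑ) := by
        congr with y
        rw [enorm_mul, enorm_norm, hmoment, ← lintegral_const_mul' _ _ enorm_ne_top]
        congr with x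
        rw [mul_comm |x|]
        ring
    _ = beurlingIntegral f := by
        have hexp : Measurable fun w : ℝ × ℝ ↦ ENNReal.ofReal (Real.exp (|w.2| * |w.1|)) := by
          fun_prop
        exact lintegral_lintegral_swap <| hf_int.aestronglyMeasurable.enorm.comp_snd.mul
          (hexp.mul (hmeas.comp measurable_fst)).aemeasurable

theorem beurlingClass_fourierLaplace {f : ℝ → ℂ}
    (hf : ∀ c : ℝ, Integrable fun x ↦ Real.exp (c * |x|) • f x) (h : beurlingIntegral f ≠ ∞) :
    BeurlingClass (expMoment f) (beurlingIntegral f).toReal (fourierLaplace f) := by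
  have hnonneg (y : ℝ) : 0 ≤ ‖fourierLaplace f y‖ * expMoment f |y| :=
    mul_nonneg (norm_nonneg _) (expMoment_nonneg f _)
  have hmeas : AEStronglyMeasurable fun y : ℝ ↦ ‖fourierLaplace f y‖ * expMoment f |y| := by
    have := (continuous_fourierLaplace_ofReal (f := f) (by simpa using hf 0)).norm.measurable
    have := (expMoment_mono hf).measurable
    exact (by fun_prop : Measurable _).aestronglyMeasurable
  refine ⟨differentiable_fourierLaplace hf, norm_fourierLaplace_le_expMoment hf, ⟨hmeas, ?_⟩, ?_⟩
  · rw [HasFiniteIntegral, lintegral_enorm_fourierLaplace_mul_expMoment hf]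
    exact h.lt_top
  · rw [← lintegral_enorm_fourierLaplace_mul_expMoment hf, ← integral_norm_eq_lintegral_enorm hmeas]
    simp only [Real.norm_of_nonneg (hnonneg _), le_refl]

theorem ae_eq_zero_of_beurlingIntegral_ne_top {f : ℝ → ℂ} (hf : Integrable f)
    (h : beurlingIntegral f ≠ ∞) : f =ᵐ[volume] 0 := by
  have hmoments := integrable_exp_smul_gaussianMul hf
  have hfinite : beurlingIntegral (gaussianMul f) ≠ ∞ :=
    ne_top_of_le_ne_top (ENNReal.mul_ne_top ENNReal.ofNat_ne_top h)
      (beurlingIntegral_gaussianMul_le hf)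
  have hentire : fourierLaplace (gaussianMul f) = 0 :=
    (beurlingClass_fourierLaplace hmoments hfinite).eq_zero (expMoment_mono hmoments)
      one_half_pos.le fun t _ ↦ expMoment_gaussianMul_le hf t
  have hfourier : 𝓕 (gaussianMul f) = 0 := by
    ext y
    have := fourierLaplace_ofReal (gaussianMul f) (y * (2 * Real.pi))
    rw [mul_div_cancel_right₀ _ Real.two_pi_pos.ne'] at this
    rw [← this, hentire]
    rfl
  filter_upwards [ae_eq_zero_of_fourier_eq_zero (by simpa using hmoments 0) hfourier] with x hx
  exact (smul_eq_zero.1 hx).resolve_left (Real.exp_pos _).ne'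

theorem beurlingIntegral_ne_top_of_exp_le_mul {u v : ℝ → ℝ}
    (huv : ∀ x y, Real.exp (|x| * |y|) ≤ u x * v y) (hu : Integrable fun x ↦ ‖f x‖ * u x)
    (hv : Integrable fun y : ℝ ↦ ‖fourierLaplace f y‖ * v y) : beurlingIntegral f ≠ ∞ := by
  have hpoint (x y : ℝ) :
      ‖f x‖ₑ * (.ofReal (Real.exp (|x| * |y|)) * ‖fourierLaplace f y‖ₑ) ≤
        ‖‖f x‖ * u x‖ₑ * ‖‖fourierLaplace f y‖ * v y‖ₑ := by
    calc ‖f x‖ₑ * (.ofReal (Real.exp (|x| * |y|)) * ‖fourierLaplace f y‖ₑ)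
        ≤ ‖f x‖ₑ * (‖u x * v y‖ₑ * ‖fourierLaplace f y‖ₑ) := by
          gcongr
          exact (ENNReal.ofReal_le_ofReal (huv x y)).trans (Real.ofReal_le_enorm _)
      _ = ‖‖f x‖ * u x‖ₑ * ‖‖fourierLaplace f y‖ * v y‖ₑ := by
          simp only [enorm_mul, enorm_norm]
          ring
  refine ne_top_of_le_ne_top (ENNReal.mul_ne_top hu.2.ne hv.2.ne) ?_
  calc beurlingIntegral f
      ≤ ∫⁻ x, ∫⁻ y : ℝ, ‖‖f x‖ * u x‖ₑ * ‖‖fourierLaplace f y‖ * v y‖ₑ :=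
        lintegral_mono fun x ↦ lintegral_mono (hpoint x)
    _ = (∫⁻ x, ‖‖f x‖ * u x‖ₑ) * ∫⁻ y : ℝ, ‖‖fourierLaplace f y‖ * v y‖ₑ := by
        simp_rw [lintegral_const_mul' _ _ enorm_ne_top]
        exact lintegral_mul_const' _ _ hv.2.ne

end Beurling

theorem exp_abs_mul_abs_le_of_one_le_mul {p q α β : ℝ} (hpq : p.HolderConjugate q) (hα : 0 ≤ α)
    (hβ : 0 ≤ β) (hαβ : 1 ≤ α * β) (x y : ℝ) :
    Real.exp (|x| * |y|) ≤ Real.exp ((α * |x|) ^ p / p) * Real.exp ((β * |y|) ^ q / q) := by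
  rw [← Real.exp_add]
  gcongr
  calc |x| * |y| ≤ α * β * (|x| * |y|) := le_mul_of_one_le_left (by positivity) hαβ
    _ = α * |x| * (β * |y|) := mul_mul_mul_comm _ _ _ _
    _ ≤ (α * |x|) ^ p / p + (β * |y|) ^ q / q :=
      Real.young_inequality_of_nonneg (by positivity) (by positivity) hpq

theorem gelfand_shilov_theorem_R (f : ℝ → ℂ) (hf : Integrable f)
    (F : ℝ → ℂ)
    (hF : ∀ l : ℝ, F l = ∫ t : ℝ, f t * Complex.exp (-(Complex.I * l * t)))
    (p q α β : ℝ) (hp : 1 < p) (hq : 1 < q) (hpq : 1 / p + 1 / q = 1)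
    (hα : 0 < α) (hβ : 0 < β) (hαβ : 1 ≤ α * β)
    (h1 : Integrable (fun x : ℝ => ‖f x‖ * Real.exp ((α * |x|) ^ p / p)))
    (h2 : Integrable (fun l : ℝ => ‖F l‖ * Real.exp ((β * |l|) ^ q / q))) :
    f =ᵐ[volume] 0 := by
  have hconj : p.HolderConjugate q := ⟨by simpa using hpq, by linarith, by linarith⟩
  have hF_eq : F = fun l : ℝ ↦ fourierLaplace f l := by
    ext l
    simp only [hF, fourierLaplace, smul_eq_mul, mul_comm]
  rw [hF_eq] at h2
  exact ae_eq_zero_of_beurlingIntegral_ne_top hf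
    (beurlingIntegral_ne_top_of_exp_le_mul
      (exp_abs_mul_abs_le_of_one_le_mul hconj hα.le hβ.le hαβ) h1 h2)
end
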